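/- For any Borel probability measures μ and ν on X and any p ≥ 1 and k > 0, RPW_{p,k}(μ, ν) ≤ (1/k)·W_p(μ, ν) ≤ RPW_{p,k}(μ, ν) + k^{−(p+1)/p}. -/

import Mathlib

open MeasureTheory

noncomputable section

/-- `γ` is an `α`-partial transport plan from `μ` to `ν`: a Borel measure on `X × X` of
total mass `α` whose first marginal is dominated by `μ` and second marginal by `ν`. -/
def IsPartialPlan {X : Type*} [MeasurableSpace X] (μ ν : Measure X) (α : ℝ)
    (γ : Measure (X × X)) : Prop :=
  γ Set.univ = ENNReal.ofReal α ∧ γ.map Prod.fst ≤ μ ∧ γ.map Prod.snd ≤ ν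

/-- The cost `w_p(γ) = (∫ c(x,y)^p dγ)^(1/p)` of a transport plan. -/
def planCost {X : Type*} [MetricSpace X] [MeasurableSpace X] (p : ℝ)
    (γ : Measure (X × X)) : ℝ :=
  (∫ z, dist z.1 z.2 ^ p ∂γ) ^ (1 / p)

/-- The `α`-partial `p`-Wasserstein distance `W_{p,α}(μ, ν)`. -/
def partialW {X : Type*} [MetricSpace X] [MeasurableSpace X] (p α : ℝ)
    (μ ν : Measure X) : ℝ :=
  sInf { c : ℝ | ∃ γ : Measure (X × X), IsPartialPlan μ ν α γ ∧ c = planCost p γ }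

/-- The `(p,k)`-RPW distance: the least `ε ∈ [0,1]` with `W_{p,1-ε}(μ,ν) ≤ kε`. -/
def RPW {X : Type*} [MetricSpace X] [MeasurableSpace X] (p k : ℝ)
    (μ ν : Measure X) : ℝ :=
  sInf { ε : ℝ | ε ∈ Set.Icc (0:ℝ) 1 ∧ partialW p (1 - ε) μ ν ≤ k * ε }

/-!
Scaling a full transport plan by `1 - ε` gives a `(1 - ε)`-partial plan that is no more expensive,
so `ε = W_p / k` is admissible in the infimum defining the RPW distance; this is the lower bound.

For the upper bound on a space of diameter at most `D`, let `ε` be admissible. A `(1 - ε)`-partial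
plan is completed by coupling the uncovered parts of `μ` and `ν` through their normalized product.
This moves mass `ε` over distance at most `D`, so `W_p ≤ k ε + D ε ^ (1 / p)` because
`t ↦ t ^ (1 / p)` is subadditive for `p ≥ 1`. If `ε ≤ D / k`, the last term divided by `k` is at
most `(D / k) ^ ((p + 1) / p)`; if `ε > D / k`, then `W_p / k ≤ D / k < ε` already.
-/

section PartialPlans

variable {X : Type*} [MeasurableSpace X] {μ ν μ₁ μ₂ ν₁ ν₂ : Measure X} {α β m : ℝ}
  {γ π : Measure (X × X)}

namespace IsPartialPlan

lemma zero : IsPartialPlan μ ν 0 0 := by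
  simp [IsPartialPlan, Measure.zero_le]

lemma smul (h : IsPartialPlan μ ν α γ) (hβ₀ : 0 ≤ β) (hβ₁ : β ≤ 1) :
    IsPartialPlan μ ν (β * α) (ENNReal.ofReal β • γ) := by
  have smul_le {Y : Type _} [MeasurableSpace Y] (ρ : Measure Y) : ENNReal.ofReal β • ρ ≤ ρ :=
    fun s => mul_le_of_le_one_left' (ENNReal.ofReal_le_one.2 hβ₁)
  obtain ⟨hmass, hfst, hsnd⟩ := h
  refine ⟨?_, ?_, ?_⟩
  · rw [Measure.smul_apply, hmass, smul_eq_mul, ENNReal.ofReal_mul hβ₀]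
  · rw [Measure.map_smul]
    exact (smul_le _).trans hfst
  · rw [Measure.map_smul]
    exact (smul_le _).trans hsnd

lemma rescale (h : IsPartialPlan μ ν β γ) (hα : 0 ≤ α) (hαβ : α ≤ β) :
    IsPartialPlan μ ν α (ENNReal.ofReal (α / β) • γ) := by
  have hβ : 0 ≤ β := hα.trans hαβ
  have hplan := h.smul (div_nonneg hα hβ) (div_le_one_of_le₀ hαβ hβ)
  rwa [div_mul_cancel_of_imp fun hβ₀ => le_antisymm (hβ₀ ▸ hαβ) hα] at hplan

lemma add (h₁ : IsPartialPlan μ₁ ν₁ α γ) (h₂ : IsPartialPlan μ₂ ν₂ β π)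
    (hα : 0 ≤ α) (hβ : 0 ≤ β) :
    IsPartialPlan (μ₁ + μ₂) (ν₁ + ν₂) (α + β) (γ + π) := by
  refine ⟨?_, ?_, ?_⟩
  · rw [Measure.add_apply, h₁.1, h₂.1, ENNReal.ofReal_add hα hβ]
  · rw [Measure.map_add _ _ measurable_fst]
    exact add_le_add h₁.2.1 h₂.2.1
  · rw [Measure.map_add _ _ measurable_snd]
    exact add_le_add h₁.2.2 h₂.2.2

lemma isFiniteMeasure (h : IsPartialPlan μ ν α γ) : IsFiniteMeasure γ :=
  ⟨h.1 ▸ ENNReal.ofReal_lt_top⟩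

lemma real_univ (h : IsPartialPlan μ ν α γ) (hα : 0 ≤ α) : γ.real Set.univ = α := by
  rw [Measure.real, h.1, ENNReal.toReal_ofReal hα]

end IsPartialPlan

lemma exists_isPartialPlan_of_univ_eq (hμ : μ Set.univ = ENNReal.ofReal m)
    (hν : ν Set.univ = ENNReal.ofReal m) : ∃ γ, IsPartialPlan μ ν m γ := by
  have : IsFiniteMeasure μ := ⟨hμ ▸ ENNReal.ofReal_lt_top⟩
  have : IsFiniteMeasure ν := ⟨hν ▸ ENNReal.ofReal_lt_top⟩
  obtain hm | hm := le_or_gt m 0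
  · exact ⟨0, by simp [IsPartialPlan, Measure.zero_le, ENNReal.ofReal_of_nonpos hm]⟩
  have inv_mul_mass : (ENNReal.ofReal m)⁻¹ * ENNReal.ofReal m = 1 :=
    ENNReal.inv_mul_cancel (by simpa using hm) ENNReal.ofReal_ne_top
  refine ⟨(ENNReal.ofReal m)⁻¹ • μ.prod ν, ?_, ?_, ?_⟩
  · rw [Measure.smul_apply, ← Set.univ_prod_univ, Measure.prod_prod, hμ, hν, smul_eq_mul,
      ← mul_assoc, inv_mul_mass, one_mul]
  · rw [Measure.map_smul, Measure.map_fst_prod, hν, smul_smul, inv_mul_mass, one_smul]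
  · rw [Measure.map_smul, Measure.map_snd_prod, hμ, smul_smul, inv_mul_mass, one_smul]

lemma measure_sub_univ [IsFiniteMeasure μ₂] (hle : μ₂ ≤ μ₁)
    (h₁ : μ₁ Set.univ = ENNReal.ofReal m) (h₂ : μ₂ Set.univ = ENNReal.ofReal α) (hα : 0 ≤ α) :
    (μ₁ - μ₂) Set.univ = ENNReal.ofReal (m - α) := by
  rw [Measure.sub_apply .univ hle, h₁, h₂, ENNReal.ofReal_sub m hα]

lemma IsPartialPlan.exists_completion (h : IsPartialPlan μ ν α γ) (hα : 0 ≤ α) (hαm : α ≤ m)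
    (hμ : μ Set.univ = ENNReal.ofReal m) (hν : ν Set.univ = ENNReal.ofReal m) :
    ∃ π : Measure (X × X),
      π Set.univ = ENNReal.ofReal (m - α) ∧ IsPartialPlan μ ν m (γ + π) := by
  have := h.isFiniteMeasure
  obtain ⟨hmass, hfst, hsnd⟩ := h
  have hfst_mass : γ.map Prod.fst Set.univ = ENNReal.ofReal α := by
    rw [Measure.map_apply measurable_fst .univ, Set.preimage_univ, hmass]
  have hsnd_mass : γ.map Prod.snd Set.univ = ENNReal.ofReal α := by
    rw [Measure.map_apply measurable_snd .univ, Set.preimage_univ, hmass]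
  obtain ⟨π, hπ⟩ := exists_isPartialPlan_of_univ_eq (measure_sub_univ hfst hμ hfst_mass hα)
    (measure_sub_univ hsnd hν hsnd_mass hα)
  have hγ : IsPartialPlan (γ.map Prod.fst) (γ.map Prod.snd) α γ := ⟨hmass, le_rfl, le_rfl⟩
  refine ⟨π, hπ.1, ?_⟩
  have hsum := hπ.add hγ (sub_nonneg.2 hαm) hα
  rwa [Measure.sub_add_cancel_of_le hfst, Measure.sub_add_cancel_of_le hsnd, sub_add_cancel,
    add_comm π γ] at hsum

end PartialPlans

section DistRpow

variable {X : Type*} [PseudoMetricSpace X] {p D : ℝ}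

lemma norm_dist_rpow_le (hp : 0 ≤ p) (hD : ∀ a b : X, dist a b ≤ D) (a b : X) :
    ‖dist a b ^ p‖ ≤ D ^ p := by
  rw [Real.norm_of_nonneg (Real.rpow_nonneg dist_nonneg p)]
  exact Real.rpow_le_rpow dist_nonneg (hD a b) hp

variable [MeasurableSpace X]

lemma integral_dist_rpow_nonneg (p : ℝ) (γ : Measure (X × X)) :
    0 ≤ ∫ z, dist z.1 z.2 ^ p ∂γ :=
  integral_nonneg fun _ => Real.rpow_nonneg dist_nonneg p

lemma integrable_dist_rpow [SecondCountableTopology X] [OpensMeasurableSpace X]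
    {γ : Measure (X × X)} [IsFiniteMeasure γ] (hp : 0 ≤ p) (hD : ∀ a b : X, dist a b ≤ D) :
    Integrable (fun z : X × X => dist z.1 z.2 ^ p) γ :=
  .of_bound (continuous_dist.rpow_const fun _ => .inr hp).aestronglyMeasurable (D ^ p) <|
    .of_forall fun z => norm_dist_rpow_le hp hD z.1 z.2

end DistRpow

section WassersteinDistances

variable {X : Type*} [MetricSpace X] [MeasurableSpace X] {μ ν : Measure X} {p k α β m ε D : ℝ}
  {γ π : Measure (X × X)}

lemma planCost_nonneg (p : ℝ) (γ : Measure (X × X)) : 0 ≤ planCost p γ :=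
  Real.rpow_nonneg (integral_dist_rpow_nonneg p γ) _

lemma planCost_zero (hp : p ≠ 0) : planCost p (0 : Measure (X × X)) = 0 := by
  rw [planCost, integral_zero_measure, Real.zero_rpow (one_div_ne_zero hp)]

lemma planCost_smul (hβ : 0 ≤ β) :
    planCost p (ENNReal.ofReal β • γ) = β ^ (1 / p) * planCost p γ := by
  rw [planCost, integral_smul_measure, ENNReal.toReal_ofReal hβ, smul_eq_mul,
    Real.mul_rpow hβ (integral_dist_rpow_nonneg p γ), planCost]

lemma planCost_add_le (hp : 1 ≤ p) (hγ : Integrable (fun z : X × X => dist z.1 z.2 ^ p) γ)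
    (hπ : Integrable (fun z : X × X => dist z.1 z.2 ^ p) π) :
    planCost p (γ + π) ≤ planCost p γ + planCost p π := by
  rw [planCost, integral_add_measure hγ hπ]
  have hp₀ : 0 < p := one_pos.trans_le hp
  exact Real.rpow_add_le_add_rpow (integral_dist_rpow_nonneg p γ)
    (integral_dist_rpow_nonneg p π) (one_div_nonneg.2 hp₀.le) ((div_le_one hp₀).2 hp)

lemma planCost_le_of_dist_le [IsFiniteMeasure γ] (hp : 0 < p) (hD₀ : 0 ≤ D)
    (hD : ∀ a b : X, dist a b ≤ D) :
    planCost p γ ≤ D * γ.real Set.univ ^ (1 / p) := by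
  have integral_le : ∫ z, dist z.1 z.2 ^ p ∂γ ≤ D ^ p * γ.real Set.univ :=
    (Real.le_norm_self _).trans <| norm_integral_le_of_norm_le_const <|
      .of_forall fun z => norm_dist_rpow_le hp.le hD z.1 z.2
  calc planCost p γ ≤ (D ^ p * γ.real Set.univ) ^ (1 / p) :=
        Real.rpow_le_rpow (integral_dist_rpow_nonneg p γ) integral_le (one_div_nonneg.2 hp.le)
    _ = D * γ.real Set.univ ^ (1 / p) := by
        rw [Real.mul_rpow (Real.rpow_nonneg hD₀ p) measureReal_nonneg, one_div,
          Real.rpow_rpow_inv hD₀ hp.ne']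

lemma partialW_le_planCost (h : IsPartialPlan μ ν α γ) : partialW p α μ ν ≤ planCost p γ :=
  csInf_le ⟨0, by rintro _ ⟨γ, -, rfl⟩; exact planCost_nonneg p γ⟩ ⟨γ, h, rfl⟩

lemma le_partialW {b : ℝ} (hne : ∃ γ, IsPartialPlan μ ν α γ)
    (h : ∀ γ, IsPartialPlan μ ν α γ → b ≤ planCost p γ) : b ≤ partialW p α μ ν := by
  obtain ⟨γ, hγ⟩ := hne
  refine le_csInf ⟨_, γ, hγ, rfl⟩ ?_
  rintro _ ⟨γ, hγ, rfl⟩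
  exact h γ hγ

lemma partialW_nonneg (p α : ℝ) (μ ν : Measure X) : 0 ≤ partialW p α μ ν :=
  Real.sInf_nonneg (by rintro _ ⟨γ, -, rfl⟩; exact planCost_nonneg p γ)

lemma partialW_zero (hp : p ≠ 0) (μ ν : Measure X) : partialW p 0 μ ν = 0 :=
  ((partialW_le_planCost .zero).trans_eq (planCost_zero hp)).antisymm (partialW_nonneg p 0 μ ν)

lemma partialW_mono (hp : 0 ≤ p) (hα : 0 ≤ α) (hαβ : α ≤ β)
    (hne : ∃ γ, IsPartialPlan μ ν β γ) : partialW p α μ ν ≤ partialW p β μ ν := by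
  refine le_partialW hne fun γ hγ => ?_
  have hβ : 0 ≤ β := hα.trans hαβ
  have hratio₀ : 0 ≤ α / β := div_nonneg hα hβ
  have hratio₁ : α / β ≤ 1 := div_le_one_of_le₀ hαβ hβ
  calc partialW p α μ ν ≤ planCost p (ENNReal.ofReal (α / β) • γ) :=
        partialW_le_planCost (hγ.rescale hα hαβ)
    _ = (α / β) ^ (1 / p) * planCost p γ := planCost_smul hratio₀
    _ ≤ planCost p γ := mul_le_of_le_one_left (planCost_nonneg p γ)
        (Real.rpow_le_one hratio₀ hratio₁ (one_div_nonneg.2 hp))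

lemma partialW_le_of_dist_le (hp : 0 < p) (hD₀ : 0 ≤ D) (hD : ∀ a b : X, dist a b ≤ D)
    (hα : 0 ≤ α) (hne : ∃ γ, IsPartialPlan μ ν α γ) :
    partialW p α μ ν ≤ D * α ^ (1 / p) := by
  obtain ⟨γ, hγ⟩ := hne
  have := hγ.isFiniteMeasure
  exact hγ.real_univ hα ▸ (partialW_le_planCost hγ).trans (planCost_le_of_dist_le hp hD₀ hD)

lemma partialW_le_add_of_dist_le [SecondCountableTopology X] [OpensMeasurableSpace X]
    (hp : 1 ≤ p) (hD₀ : 0 ≤ D) (hD : ∀ a b : X, dist a b ≤ D) (hα : 0 ≤ α) (hαm : α ≤ m)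
    (hμ : μ Set.univ = ENNReal.ofReal m) (hν : ν Set.univ = ENNReal.ofReal m) :
    partialW p m μ ν ≤ partialW p α μ ν + D * (m - α) ^ (1 / p) := by
  obtain ⟨γ₀, hγ₀⟩ := exists_isPartialPlan_of_univ_eq hμ hν
  rw [← sub_le_iff_le_add]
  refine le_partialW ⟨_, hγ₀.rescale hα hαm⟩ fun γ hγ => sub_le_iff_le_add.2 ?_
  obtain ⟨π, hπ_mass, hplan⟩ := hγ.exists_completion hα hαm hμ hν
  have hp₀ : 0 < p := one_pos.trans_le hp
  have := hγ.isFiniteMeasure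
  have : IsFiniteMeasure π := ⟨hπ_mass ▸ ENNReal.ofReal_lt_top⟩
  have hπ_real : π.real Set.univ = m - α := by
    rw [Measure.real, hπ_mass, ENNReal.toReal_ofReal (sub_nonneg.2 hαm)]
  calc partialW p m μ ν ≤ planCost p (γ + π) := partialW_le_planCost hplan
    _ ≤ planCost p γ + planCost p π :=
        planCost_add_le hp (integrable_dist_rpow hp₀.le hD) (integrable_dist_rpow hp₀.le hD)
    _ ≤ planCost p γ + D * (m - α) ^ (1 / p) := by
        gcongr
        exact hπ_real ▸ planCost_le_of_dist_le hp₀ hD₀ hD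

lemma RPW_le (hε : ε ∈ Set.Icc (0 : ℝ) 1) (h : partialW p (1 - ε) μ ν ≤ k * ε) :
    RPW p k μ ν ≤ ε :=
  csInf_le ⟨0, fun _ hδ => hδ.1.1⟩ ⟨hε, h⟩

lemma partialW_one_sub_one_le (hp : p ≠ 0) (hk : 0 ≤ k) (μ ν : Measure X) :
    partialW p (1 - 1) μ ν ≤ k * 1 := by
  rwa [sub_self, partialW_zero hp, mul_one]

lemma le_RPW {b : ℝ} (hp : p ≠ 0) (hk : 0 ≤ k)
    (h : ∀ ε ∈ Set.Icc (0 : ℝ) 1, partialW p (1 - ε) μ ν ≤ k * ε → b ≤ ε) : b ≤ RPW p k μ ν :=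
  le_csInf ⟨1, Set.right_mem_Icc.2 zero_le_one, partialW_one_sub_one_le hp hk μ ν⟩
    fun ε hε => h ε hε.1 hε.2

lemma RPW_le_one (hp : p ≠ 0) (hk : 0 ≤ k) (μ ν : Measure X) : RPW p k μ ν ≤ 1 :=
  RPW_le (Set.right_mem_Icc.2 zero_le_one) (partialW_one_sub_one_le hp hk μ ν)

lemma RPW_le_one_div_mul_partialW (hp : 0 < p) (hk : 0 < k)
    (hne : ∃ γ, IsPartialPlan μ ν 1 γ) : RPW p k μ ν ≤ (1 / k) * partialW p 1 μ ν := by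
  have hε₀ : 0 ≤ (1 / k) * partialW p 1 μ ν :=
    mul_nonneg (one_div_nonneg.2 hk.le) (partialW_nonneg p 1 μ ν)
  obtain hε₁ | hε₁ := le_total ((1 / k) * partialW p 1 μ ν) 1
  · refine RPW_le ⟨hε₀, hε₁⟩ ?_
    rw [← mul_assoc, mul_one_div_cancel hk.ne', one_mul]
    exact partialW_mono hp.le (sub_nonneg.2 hε₁) (sub_le_self 1 hε₀) hne
  · exact (RPW_le_one hp.ne' hk.le μ ν).trans hε₁

lemma one_div_mul_le_add_rpow {w : ℝ} (hp : 0 < p) (hk : 0 < k) (hD : 0 ≤ D) (hε : 0 ≤ ε)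
    (hw : w ≤ k * ε + D * ε ^ (1 / p)) (hwD : w ≤ D) :
    (1 / k) * w ≤ ε + (D / k) ^ ((p + 1) / p) := by
  have hDk : 0 ≤ D / k := div_nonneg hD hk.le
  obtain h | h := le_total ε (D / k)
  · calc (1 / k) * w ≤ (1 / k) * (k * ε + D * ε ^ (1 / p)) := by gcongr
      _ = ε + D / k * ε ^ (1 / p) := by field_simp
      _ ≤ ε + D / k * (D / k) ^ (1 / p) := by gcongr
      _ = ε + (D / k) ^ ((p + 1) / p) := by
          rw [add_div, div_self hp.ne', Real.rpow_one_add' hDk (by positivity)]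
  · calc (1 / k) * w ≤ D / k := by rw [one_div_mul_eq_div]; gcongr
      _ ≤ ε := h
      _ ≤ ε + (D / k) ^ ((p + 1) / p) := le_add_of_nonneg_right (Real.rpow_nonneg hDk _)

theorem rpw_wasserstein_sandwich_general [SecondCountableTopology X] [OpensMeasurableSpace X]
    (hD : ∀ a b : X, dist a b ≤ D) (μ ν : Measure X) [IsProbabilityMeasure μ]
    [IsProbabilityMeasure ν] (hp : 1 ≤ p) (hk : 0 < k) :
    RPW p k μ ν ≤ (1 / k) * partialW p 1 μ ν ∧
    (1 / k) * partialW p 1 μ ν ≤ RPW p k μ ν + (D / k) ^ ((p + 1) / p) := by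
  have hp₀ : 0 < p := one_pos.trans_le hp
  have hD₀ : 0 ≤ D := (nonempty_of_isProbabilityMeasure μ).elim fun x => dist_self x ▸ hD x x
  have hμ : μ Set.univ = ENNReal.ofReal 1 := by simp
  have hν : ν Set.univ = ENNReal.ofReal 1 := by simp
  have hplan := exists_isPartialPlan_of_univ_eq hμ hν
  refine ⟨RPW_le_one_div_mul_partialW hp₀ hk hplan, ?_⟩
  rw [← sub_le_iff_le_add]
  refine le_RPW hp₀.ne' hk.le fun ε ⟨hε₀, hε₁⟩ hε => sub_le_iff_le_add.2 ?_
  have hW := partialW_le_add_of_dist_le hp hD₀ hD (sub_nonneg.2 hε₁) (sub_le_self 1 hε₀) hμ hν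
  have hWD := partialW_le_of_dist_le hp₀ hD₀ hD zero_le_one hplan
  rw [sub_sub_cancel] at hW
  rw [Real.one_rpow, mul_one] at hWD
  exact one_div_mul_le_add_rpow hp₀ hk hD₀ hε₀ (hW.trans (by gcongr)) hWD

end WassersteinDistances

/-- For any Borel probability measures `μ, ν`, `p ≥ 1` and `k > 0`,
`RPW_{p,k}(μ, ν) ≤ (1/k)·W_p(μ, ν) ≤ RPW_{p,k}(μ, ν) + k^{−(p+1)/p}`. -/
theorem rpw_wasserstein_sandwich
    {X : Type*} [MetricSpace X] [CompactSpace X] [MeasurableSpace X] [BorelSpace X]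
    (hdiam : ∀ a b : X, dist a b ≤ 1)
    (μ ν : Measure X) [IsProbabilityMeasure μ] [IsProbabilityMeasure ν]
    (p k : ℝ) (hp : 1 ≤ p) (hk : 0 < k) :
    RPW p k μ ν ≤ (1 / k) * partialW p 1 μ ν ∧
    (1 / k) * partialW p 1 μ ν ≤ RPW p k μ ν + k ^ (-((p + 1) / p)) := by
  rw [Real.rpow_neg_eq_inv_rpow, inv_eq_one_div]
  exact rpw_wasserstein_sandwich_general hdiam μ ν hp hk
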